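/- Let φ : ℝ² → ℝ be a smooth function of (X,T) satisfying ∂_X ∂_T φ + φ = 0 everywhere, and let λ_1, λ_2 be real numbers. Define ψ = ∂_{XX} φ + (λ_1 + λ_2) ∂_X φ + λ_1 λ_2 φ, so that the two-parameter Bäcklund transform is u^{λ_1,λ_2} = (∂_{XXX} φ + (λ_1+λ_2) ∂_{XX} φ + λ_1 λ_2 ∂_X φ)/(∂_{XX} φ + (λ_1+λ_2) ∂_X φ + λ_1 λ_2 φ) = (∂_X ψ)/ψ. Then u^{λ_1,λ_2} is symmetric under interchange of λ_1 and λ_2, and at every point (X,T) where ψ(X,T) ≠ 0 and ∂_X ψ(X,T) ≠ 0 it satisfies ∂_T u^{λ_1,λ_2} + ∂_X((1 + ∂_T u^{λ_1,λ_2})/u^{λ_1,λ_2}) = 0. -/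

import Mathlib

/-- The auxiliary function `ψ = ∂_{XX} φ + (λ₁ + λ₂) ∂_X φ + λ₁ λ₂ φ`. -/
noncomputable def psiBT (φ : ℝ → ℝ → ℝ) (l₁ l₂ : ℝ) (X T : ℝ) : ℝ :=
  deriv (fun x => deriv (fun x' => φ x' T) x) X
    + (l₁ + l₂) * deriv (fun x => φ x T) X + l₁ * l₂ * φ X T

/-- The two-parameter Bäcklund transform `u^{λ₁,λ₂} = (∂_X ψ)/ψ`. -/
noncomputable def btTwo (φ : ℝ → ℝ → ℝ) (l₁ l₂ : ℝ) (X T : ℝ) : ℝ :=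
  deriv (fun x => psiBT φ l₁ l₂ x T) X / psiBT φ l₁ l₂ X T

/-!
Let `u = ∂_X ψ / ψ` and `v = ∂_T ψ / ψ`, where `∂_X ∂_T ψ + ψ = 0`. Equality of mixed partials and
the linear equation give `∂_T u = -1 - u v = ∂_X v`. The first equality says `(1 + ∂_T u) / u = -v`,
so that (E1) becomes `∂_T u - ∂_X v = 0`, which is the content of the two equalities together. For
the Bäcklund transform, `ψ = (∂_X + λ₁)(∂_X + λ₂) φ`, and `∂_X + λ` maps solutions of the linear
equation to solutions.
-/

open Function Topology

section PartialDerivatives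

variable {𝕜 F : Type*} [NontriviallyNormedField 𝕜] [NormedAddCommGroup F] [NormedSpace 𝕜 F]
  {f : 𝕜 → 𝕜 → F} {X T : 𝕜} {n : WithTop ℕ∞}

/-- The partial derivative `∂_X f` of a curried function of `(X, T)`. -/
noncomputable def partialX (f : 𝕜 → 𝕜 → F) (X T : 𝕜) : F := deriv (fun x => f x T) X

/-- The partial derivative `∂_T f` of a curried function of `(X, T)`. -/
noncomputable def partialT (f : 𝕜 → 𝕜 → F) (X T : 𝕜) : F := deriv (fun t => f X t) T

lemma hasDerivAt_fst_of_uncurry (h : DifferentiableAt 𝕜 (uncurry f) (X, T)) :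
    HasDerivAt (fun x => f x T) (fderiv 𝕜 (uncurry f) (X, T) (1, 0)) X :=
  HasFDerivAt.comp_hasDerivAt (f := fun x => (x, T)) X h.hasFDerivAt
    ((hasDerivAt_id X).prodMk (hasDerivAt_const X T))

lemma hasDerivAt_snd_of_uncurry (h : DifferentiableAt 𝕜 (uncurry f) (X, T)) :
    HasDerivAt (fun t => f X t) (fderiv 𝕜 (uncurry f) (X, T) (0, 1)) T :=
  HasFDerivAt.comp_hasDerivAt (f := fun t => (X, t)) T h.hasFDerivAt
    ((hasDerivAt_const T X).prodMk (hasDerivAt_id T))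

lemma hasDerivAt_partialX (h : DifferentiableAt 𝕜 (uncurry f) (X, T)) :
    HasDerivAt (fun x => f x T) (partialX f X T) X :=
  (hasDerivAt_fst_of_uncurry h).differentiableAt.hasDerivAt

lemma hasDerivAt_partialT (h : DifferentiableAt 𝕜 (uncurry f) (X, T)) :
    HasDerivAt (fun t => f X t) (partialT f X T) T :=
  (hasDerivAt_snd_of_uncurry h).differentiableAt.hasDerivAt

lemma uncurry_partialX_eq_fderiv (h : Differentiable 𝕜 (uncurry f)) :
    uncurry (partialX f) = fun p => fderiv 𝕜 (uncurry f) p (1, 0) :=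
  funext fun p => (hasDerivAt_fst_of_uncurry (h p)).deriv

lemma uncurry_partialT_eq_fderiv (h : Differentiable 𝕜 (uncurry f)) :
    uncurry (partialT f) = fun p => fderiv 𝕜 (uncurry f) p (0, 1) :=
  funext fun p => (hasDerivAt_snd_of_uncurry (h p)).deriv

lemma contDiff_partialX (h : ContDiff 𝕜 (n + 1) (uncurry f)) :
    ContDiff 𝕜 n (uncurry (partialX f)) := by
  rw [uncurry_partialX_eq_fderiv (h.differentiable (by simp))]
  exact (h.fderiv_right le_rfl).clm_apply contDiff_const

lemma contDiff_partialT (h : ContDiff 𝕜 (n + 1) (uncurry f)) :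
    ContDiff 𝕜 n (uncurry (partialT f)) := by
  rw [uncurry_partialT_eq_fderiv (h.differentiable (by simp))]
  exact (h.fderiv_right le_rfl).clm_apply contDiff_const

lemma differentiable_partialX (h : ContDiff 𝕜 2 (uncurry f)) :
    Differentiable 𝕜 (uncurry (partialX f)) :=
  (contDiff_partialX (n := 1) (by rwa [one_add_one_eq_two])).differentiable one_ne_zero

lemma differentiable_partialT (h : ContDiff 𝕜 2 (uncurry f)) :
    Differentiable 𝕜 (uncurry (partialT f)) :=
  (contDiff_partialT (n := 1) (by rwa [one_add_one_eq_two])).differentiable one_ne_zero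

lemma partialX_partialT_comm [IsRCLikeNormedField 𝕜] (h : ContDiff 𝕜 2 (uncurry f)) :
    partialX (partialT f) = partialT (partialX f) := by
  have hf : Differentiable 𝕜 (uncurry f) := h.differentiable two_ne_zero
  have hf' : Differentiable 𝕜 (fderiv 𝕜 (uncurry f)) :=
    (h.fderiv_right (m := 1) one_add_one_eq_two.le).differentiable one_ne_zero
  have fderiv_fderiv_apply (p v w : 𝕜 × 𝕜) :
      fderiv 𝕜 (fun q => fderiv 𝕜 (uncurry f) q v) p w
        = fderiv 𝕜 (fderiv 𝕜 (uncurry f)) p w v := by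
    rw [fderiv_clm_apply (hf' p) (differentiableAt_const v)]
    simp
  funext X T
  calc partialX (partialT f) X T
      = fderiv 𝕜 (uncurry (partialT f)) (X, T) (1, 0) :=
        (hasDerivAt_fst_of_uncurry (differentiable_partialT h _)).deriv
    _ = fderiv 𝕜 (fderiv 𝕜 (uncurry f)) (X, T) (1, 0) (0, 1) := by
        rw [uncurry_partialT_eq_fderiv hf, fderiv_fderiv_apply]
    _ = fderiv 𝕜 (fderiv 𝕜 (uncurry f)) (X, T) (0, 1) (1, 0) :=
        h.contDiffAt.isSymmSndFDerivAt (by simp) _ _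
    _ = fderiv 𝕜 (uncurry (partialX f)) (X, T) (0, 1) := by
        rw [uncurry_partialX_eq_fderiv hf, fderiv_fderiv_apply]
    _ = partialT (partialX f) X T :=
        (hasDerivAt_snd_of_uncurry (differentiable_partialX h _)).deriv.symm

end PartialDerivatives

section Equations

variable {𝕜 : Type*} [NontriviallyNormedField 𝕜]

/-- The linear equation `∂_X ∂_T φ + φ = 0`, required at every point. -/
def SolvesLinear (φ : 𝕜 → 𝕜 → 𝕜) : Prop :=
  ∀ X T, partialX (partialT φ) X T + φ X T = 0

/-- Equation (E1), `∂_T u + ∂_X ((1 + ∂_T u) / u) = 0`, at the point `(X, T)`. It is meaningful only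
where `u X T ≠ 0`, since otherwise the quotient takes the junk value `0`. -/
def SolvesE1At (u : 𝕜 → 𝕜 → 𝕜) (X T : 𝕜) : Prop :=
  partialT u X T + partialX (fun x t => (1 + partialT u x t) / u x t) X T = 0

/-- The Cole–Hopf transform `u = ∂_X φ / φ`. -/
noncomputable def coleHopf (φ : 𝕜 → 𝕜 → 𝕜) (X T : 𝕜) : 𝕜 := partialX φ X T / φ X T

/-- The operator `∂_X + l`, whose composites give the Bäcklund transformations. -/
noncomputable def shiftedPartialX (l : 𝕜) (φ : 𝕜 → 𝕜 → 𝕜) (X T : 𝕜) : 𝕜 :=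
  partialX φ X T + l * φ X T

end Equations

section ColeHopf

variable {𝕜 : Type*} [NontriviallyNormedField 𝕜] {ψ : 𝕜 → 𝕜 → 𝕜} {X T : 𝕜}

lemma partialX_partialT_div_self (hψ : ContDiff 𝕜 2 (uncurry ψ)) (hlin : SolvesLinear ψ)
    (h₀ : ψ X T ≠ 0) :
    partialX (fun x t => partialT ψ x t / ψ x t) X T
      = -1 - coleHopf ψ X T * (partialT ψ X T / ψ X T) := by
  have hquot := (hasDerivAt_partialX (differentiable_partialT hψ (X, T))).fun_div
    (hasDerivAt_partialX (hψ.differentiable two_ne_zero (X, T))) h₀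
  rw [eq_neg_of_add_eq_zero_left (hlin X T)] at hquot
  rw [partialX, hquot.deriv, coleHopf]
  field_simp

variable [IsRCLikeNormedField 𝕜]

lemma partialT_coleHopf (hψ : ContDiff 𝕜 2 (uncurry ψ)) (hlin : SolvesLinear ψ)
    (h₀ : ψ X T ≠ 0) :
    partialT (coleHopf ψ) X T = -1 - coleHopf ψ X T * (partialT ψ X T / ψ X T) := by
  have hquot : HasDerivAt (fun t => coleHopf ψ X t) _ T :=
    (hasDerivAt_partialT (differentiable_partialX hψ (X, T))).fun_div
      (hasDerivAt_partialT (hψ.differentiable two_ne_zero (X, T))) h₀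
  rw [← partialX_partialT_comm hψ, eq_neg_of_add_eq_zero_left (hlin X T)] at hquot
  rw [partialT, hquot.deriv, coleHopf]
  field_simp

lemma one_add_partialT_coleHopf_div (hψ : ContDiff 𝕜 2 (uncurry ψ)) (hlin : SolvesLinear ψ)
    (h₀ : ψ X T ≠ 0) (h₁ : partialX ψ X T ≠ 0) :
    (1 + partialT (coleHopf ψ) X T) / coleHopf ψ X T = -(partialT ψ X T / ψ X T) := by
  have hu : coleHopf ψ X T ≠ 0 := div_ne_zero h₁ h₀
  rw [partialT_coleHopf hψ hlin h₀, div_eq_iff hu]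
  ring

theorem solvesE1At_coleHopf (hψ : ContDiff 𝕜 2 (uncurry ψ)) (hlin : SolvesLinear ψ)
    (h₀ : ψ X T ≠ 0) (h₁ : partialX ψ X T ≠ 0) : SolvesE1At (coleHopf ψ) X T := by
  have hev₀ : ∀ᶠ x in 𝓝 X, ψ x T ≠ 0 :=
    (hasDerivAt_partialX (hψ.differentiable two_ne_zero (X, T))).continuousAt.eventually_ne h₀
  have hev₁ : ∀ᶠ x in 𝓝 X, partialX ψ x T ≠ 0 :=
    (hasDerivAt_partialX (differentiable_partialX hψ (X, T))).continuousAt.eventually_ne h₁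
  have hflux : (fun x => (1 + partialT (coleHopf ψ) x T) / coleHopf ψ x T)
      =ᶠ[𝓝 X] fun x => -(partialT ψ x T / ψ x T) := by
    filter_upwards [hev₀, hev₁] with x hx₀ hx₁
    exact one_add_partialT_coleHopf_div hψ hlin hx₀ hx₁
  have hconservation :
      partialT (coleHopf ψ) X T = partialX (fun x t => partialT ψ x t / ψ x t) X T :=
    (partialT_coleHopf hψ hlin h₀).trans (partialX_partialT_div_self hψ hlin h₀).symm
  rw [SolvesE1At, hconservation, partialX, partialX, hflux.deriv_eq, deriv.fun_neg, add_neg_cancel]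

end ColeHopf

section Backlund

variable {𝕜 : Type*} [NontriviallyNormedField 𝕜] {φ : 𝕜 → 𝕜 → 𝕜} {n : WithTop ℕ∞}

lemma contDiff_shiftedPartialX (hφ : ContDiff 𝕜 (n + 1) (uncurry φ)) (l : 𝕜) :
    ContDiff 𝕜 n (uncurry (shiftedPartialX l φ)) :=
  (contDiff_partialX hφ).add (contDiff_const.mul (hφ.of_le le_self_add))

lemma shiftedPartialX_shiftedPartialX (hφ : ContDiff 𝕜 2 (uncurry φ)) (l₁ l₂ : 𝕜) :
    shiftedPartialX l₁ (shiftedPartialX l₂ φ) = fun X T =>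
      partialX (partialX φ) X T + (l₁ + l₂) * partialX φ X T + l₁ * l₂ * φ X T := by
  funext X T
  have hderiv : partialX (shiftedPartialX l₂ φ) X T
      = partialX (partialX φ) X T + l₂ * partialX φ X T :=
    ((hasDerivAt_partialX (differentiable_partialX hφ (X, T))).add
      ((hasDerivAt_partialX (hφ.differentiable two_ne_zero (X, T))).const_mul l₂)).deriv
  rw [shiftedPartialX, hderiv, shiftedPartialX]
  ring

lemma shiftedPartialX_comm (hφ : ContDiff 𝕜 2 (uncurry φ)) (l₁ l₂ : 𝕜) :
    shiftedPartialX l₁ (shiftedPartialX l₂ φ) = shiftedPartialX l₂ (shiftedPartialX l₁ φ) := by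
  simp only [shiftedPartialX_shiftedPartialX hφ, add_comm l₁, mul_comm l₁]

variable [IsRCLikeNormedField 𝕜]

lemma partialT_shiftedPartialX (hφ : ContDiff 𝕜 2 (uncurry φ)) (hlin : SolvesLinear φ) (l : 𝕜) :
    partialT (shiftedPartialX l φ) = fun X T => -φ X T + l * partialT φ X T := by
  funext X T
  have hderiv : partialT (shiftedPartialX l φ) X T
      = partialT (partialX φ) X T + l * partialT φ X T :=
    ((hasDerivAt_partialT (differentiable_partialX hφ (X, T))).add
      ((hasDerivAt_partialT (hφ.differentiable two_ne_zero (X, T))).const_mul l)).deriv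
  rw [hderiv, ← partialX_partialT_comm hφ, eq_neg_of_add_eq_zero_left (hlin X T)]

lemma solvesLinear_shiftedPartialX (hφ : ContDiff 𝕜 2 (uncurry φ)) (hlin : SolvesLinear φ)
    (l : 𝕜) : SolvesLinear (shiftedPartialX l φ) := by
  intro X T
  have hderiv : partialX (fun x t => -φ x t + l * partialT φ x t) X T
      = -partialX φ X T + l * partialX (partialT φ) X T :=
    ((hasDerivAt_partialX (hφ.differentiable two_ne_zero (X, T))).neg.add
      ((hasDerivAt_partialX (differentiable_partialT hφ (X, T))).const_mul l)).deriv
  rw [partialT_shiftedPartialX hφ hlin, hderiv, shiftedPartialX]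
  linear_combination l * hlin X T

theorem backlund_two_parameter_general (hφ : ContDiff 𝕜 4 (uncurry φ)) (hlin : SolvesLinear φ)
    (l₁ l₂ : 𝕜) :
    coleHopf (shiftedPartialX l₁ (shiftedPartialX l₂ φ))
        = coleHopf (shiftedPartialX l₂ (shiftedPartialX l₁ φ)) ∧
      ∀ X T, shiftedPartialX l₁ (shiftedPartialX l₂ φ) X T ≠ 0 →
        partialX (shiftedPartialX l₁ (shiftedPartialX l₂ φ)) X T ≠ 0 →
        SolvesE1At (coleHopf (shiftedPartialX l₁ (shiftedPartialX l₂ φ))) X T := by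
  have hφ₂ : ContDiff 𝕜 2 (uncurry φ) := hφ.of_le (by norm_num)
  have hχ : ContDiff 𝕜 3 (uncurry (shiftedPartialX l₂ φ)) :=
    contDiff_shiftedPartialX (hφ.of_le (by norm_num)) l₂
  have hψ : ContDiff 𝕜 2 (uncurry (shiftedPartialX l₁ (shiftedPartialX l₂ φ))) :=
    contDiff_shiftedPartialX (hχ.of_le (by norm_num)) l₁
  have hlinψ : SolvesLinear (shiftedPartialX l₁ (shiftedPartialX l₂ φ)) :=
    solvesLinear_shiftedPartialX (hχ.of_le (by norm_num))
      (solvesLinear_shiftedPartialX hφ₂ hlin l₂) l₁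
  exact ⟨by rw [shiftedPartialX_comm hφ₂], fun _ _ => solvesE1At_coleHopf hψ hlinψ⟩

end Backlund

lemma psiBT_eq_shiftedPartialX {φ : ℝ → ℝ → ℝ} (hφ : ContDiff ℝ 2 (uncurry φ)) (l₁ l₂ : ℝ) :
    psiBT φ l₁ l₂ = shiftedPartialX l₁ (shiftedPartialX l₂ φ) :=
  (shiftedPartialX_shiftedPartialX hφ l₁ l₂).symm

lemma btTwo_eq_coleHopf {φ : ℝ → ℝ → ℝ} (hφ : ContDiff ℝ 2 (uncurry φ)) (l₁ l₂ : ℝ) :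
    btTwo φ l₁ l₂ = coleHopf (shiftedPartialX l₁ (shiftedPartialX l₂ φ)) := by
  rw [← psiBT_eq_shiftedPartialX hφ]
  rfl

/-- If `φ` is smooth and satisfies `∂_X ∂_T φ + φ = 0`, then the
two-parameter Bäcklund transform `u^{λ₁,λ₂} = (∂_X ψ)/ψ`, with
`ψ = ∂_{XX} φ + (λ₁+λ₂) ∂_X φ + λ₁ λ₂ φ`, is symmetric in `(λ₁, λ₂)` and
satisfies `∂_T u + ∂_X((1 + ∂_T u)/u) = 0` wherever `ψ ≠ 0` and `∂_X ψ ≠ 0`. -/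
theorem backlund_two_parameter
    (φ : ℝ → ℝ → ℝ)
    (hφ : ContDiff ℝ (⊤ : ℕ∞) (fun p : ℝ × ℝ => φ p.1 p.2))
    (hlin : ∀ X T, deriv (fun x => deriv (fun t => φ x t) T) X + φ X T = 0)
    (l₁ l₂ : ℝ) :
    btTwo φ l₁ l₂ = btTwo φ l₂ l₁ ∧
    (∀ X T, psiBT φ l₁ l₂ X T ≠ 0 →
      deriv (fun x => psiBT φ l₁ l₂ x T) X ≠ 0 →
      deriv (fun t => btTwo φ l₁ l₂ X t) T
        + deriv (fun x =>
            (1 + deriv (fun t => btTwo φ l₁ l₂ x t) T) / btTwo φ l₁ l₂ x T) X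
        = 0) := by
  have hφ₄ : ContDiff ℝ 4 (uncurry φ) := contDiff_infty.1 hφ 4
  have hφ₂ : ContDiff ℝ 2 (uncurry φ) := contDiff_infty.1 hφ 2
  rw [btTwo_eq_coleHopf hφ₂, btTwo_eq_coleHopf hφ₂, psiBT_eq_shiftedPartialX hφ₂]
  exact backlund_two_parameter_general hφ₄ hlin l₁ l₂
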